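/- Let a ∈ (0,1), s ∈ ℝ, and b ∈ (1/2,1). There exists a constant C > 0, independent of δ, such that for every δ ∈ (0,1) and every Schwartz function f on ℝ² one has ‖ψ(t/δ) f‖_{X̃^b_s} ≤ C δ^{1/2 − b} ‖f‖_{X̃^b_s}, where ψ(t/δ) f denotes the function (x,t) ↦ ψ(t/δ) f(x,t). -/

import Mathlib

/-!
Multiplication by `ψ(t/δ)` convolves the Fourier transform in the time frequency `λ` with
`δ κ(δ y)`, where `ψ(t) = ∫ e^{-ity} κ(y) dy` with `κ` Schwartz. On a fibre of constant `ξ` this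
convolution is estimated by raising `1 + |λ - ω(ξ)| ≤ |y| + (1 + |λ - y - ω(ξ)|)` to the power `b`:
when the weight stays on `f̂`, Young's inequality `L¹ * L² → L²` applies, and when it falls on the
kernel, `L² * L¹ → L²` does, `f̂` being in `L¹` because `(1 + |λ|)^{-b}` is in `L²` for `b > 1/2`.
The `L¹` norm of the kernel does not depend on `δ`, and its homogeneous `Ḣ^b` norm scales like
`δ^{1/2 - b} ≥ 1`, which gives the constant.
-/

open MeasureTheory Complex

noncomputable section

/-- The dispersive symbol `ω(ξ) = ξ |ξ|^(1+a)`. -/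
def disp (a ξ : ℝ) : ℝ := ξ * |ξ| ^ (1 + a)

/-- Fourier transform on `ℝ`, convention `f̂(ξ) = ∫ e^{ixξ} f(x) dx`. -/
def FT1 (f : ℝ → ℂ) (ξ : ℝ) : ℂ :=
  ∫ x : ℝ, Complex.exp (Complex.I * ((x * ξ : ℝ) : ℂ)) * f x

/-- Spacetime Fourier transform, convention `f̂(ξ,λ) = ∫ e^{i(xξ+tλ)} f(x,t) dx dt`,
for `f : ℝ × ℝ → ℂ` with first coordinate `x` (space) and second `t` (time). -/
def FT2 (f : ℝ × ℝ → ℂ) (ξ lam : ℝ) : ℂ :=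
  ∫ p : ℝ × ℝ, Complex.exp (Complex.I * ((p.1 * ξ + p.2 * lam : ℝ) : ℂ)) * f p

/-- The dyadic cutoffs `χ_j`: `χ_0 = χ₀` and `χ_j(z) = χ(2^{-j} z)` for `j ≥ 1`. -/
def chiJ (χ₀ χ : ℝ → ℝ) (j : ℕ) (z : ℝ) : ℝ :=
  if j = 0 then χ₀ z else χ ((2 : ℝ) ^ (-(j : ℝ)) * z)

/-- Hypotheses on the fixed dyadic cutoffs. -/
structure DyadicCutoffs (χ₀ χ : ℝ → ℝ) : Prop where
  smooth0 : ContDiff ℝ (⊤ : ℕ∞) χ₀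
  even0 : ∀ z, χ₀ (-z) = χ₀ z
  mem0 : ∀ z, χ₀ z ∈ Set.Icc (0 : ℝ) 1
  supp0 : ∀ z, 2 < |z| → χ₀ z = 0
  one0 : ∀ z, |z| ≤ 1 → χ₀ z = 1
  smooth1 : ContDiff ℝ (⊤ : ℕ∞) χ
  even1 : ∀ z, χ (-z) = χ z
  mem1 : ∀ z, χ z ∈ Set.Icc (0 : ℝ) 1
  supp1 : ∀ z, χ z ≠ 0 → 1 / 2 < |z| ∧ |z| < 2
  partition : ∀ z, ∑' j : ℕ, chiJ χ₀ χ j z = 1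

/-- A smooth time cutoff supported in `[-1,1]`. -/
structure TimeCutoff (ψ : ℝ → ℝ) : Prop where
  smooth : ContDiff ℝ (⊤ : ℕ∞) ψ
  supp : ∀ t, ψ t ≠ 0 → |t| ≤ 1

/-- The norm `‖f‖_{X^b_s}`. -/
def Xnorm (a : ℝ) (χ₀ χ : ℝ → ℝ) (b s : ℝ) (f : ℝ × ℝ → ℂ) : ℝ :=
  ∑' j : ℕ, (2 : ℝ) ^ ((j : ℝ) * b) *
    (∫ p : ℝ × ℝ, chiJ χ₀ χ j (p.2 - disp a p.1) * (1 + |p.1|) ^ (2 * s) *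
      ‖FT2 f p.1 p.2‖ ^ 2) ^ ((1 : ℝ) / 2)

/-- The norm `‖f‖_{Y^b_{s₀,s₁}} = ‖x·f‖_{X^b_{s₀}} + ‖t·f‖_{X^b_{s₁}}`. -/
def Ynorm (a : ℝ) (χ₀ χ : ℝ → ℝ) (b s₀ s₁ : ℝ) (f : ℝ × ℝ → ℂ) : ℝ :=
  Xnorm a χ₀ χ b s₀ (fun p => (p.1 : ℂ) * f p) +
    Xnorm a χ₀ χ b s₁ (fun p => (p.2 : ℂ) * f p)

/-- The norm `‖f‖_{Z^b_s} = ‖f‖_{X^b_s} + ‖f‖_{Y^b_{s-2s*,s}}`, where `s* = 1/2 + a/2`. -/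
def Znorm (a : ℝ) (χ₀ χ : ℝ → ℝ) (b s : ℝ) (f : ℝ × ℝ → ℂ) : ℝ :=
  Xnorm a χ₀ χ b s f + Ynorm a χ₀ χ b (s - 2 * (1 / 2 + a / 2)) s f

/-- The norm `‖f‖_{X̃^b_s}`. -/
def XtildeNorm (a b s : ℝ) (f : ℝ × ℝ → ℂ) : ℝ :=
  (∫ p : ℝ × ℝ, (1 + |p.2 - disp a p.1|) ^ (2 * b) * (1 + |p.1|) ^ (2 * s) *
    ‖FT2 f p.1 p.2‖ ^ 2) ^ ((1 : ℝ) / 2)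

/-- The Sobolev norm `‖g‖_{H^s} = (∫ (1+|ξ|)^{2s} |ĝ(ξ)|² dξ)^{1/2}`. -/
def Hnorm (s : ℝ) (g : ℝ → ℂ) : ℝ :=
  (∫ ξ : ℝ, (1 + |ξ|) ^ (2 * s) * ‖FT1 g ξ‖ ^ 2) ^ ((1 : ℝ) / 2)

/-- The weighted norm `‖g‖_{F^s} = ‖g‖_{H^s} + ‖x·g‖_{H^{s-2s*}}` (here `sstar = s*`). -/
def Fnorm (sstar s : ℝ) (g : ℝ → ℂ) : ℝ :=
  Hnorm s g + Hnorm (s - 2 * sstar) (fun x => (x : ℂ) * g x)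

/-- The `L^p` norm `(∫ ‖f‖^p)^{1/p}`. -/
def Lpnorm {α : Type*} [MeasureSpace α] {E : Type*} [NormedAddCommGroup E]
    (p : ℝ) (f : α → E) : ℝ :=
  (∫ x, ‖f x‖ ^ p) ^ (1 / p)

/-- The linear propagator `W(t)`, defined via Fourier inversion so that its Fourier
transform in `x` is `e^{itω(ξ)} û₀(ξ)`. -/
def Wgrp (a : ℝ) (u₀ : ℝ → ℂ) (t x : ℝ) : ℂ :=
  ((1 / (2 * Real.pi) : ℝ) : ℂ) *
    ∫ ξ : ℝ, Complex.exp (-(Complex.I * ((x * ξ : ℝ) : ℂ))) *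
      (Complex.exp (Complex.I * ((t * disp a ξ : ℝ) : ℂ)) * FT1 u₀ ξ)

/-- The Fourier multiplier `D^σ` with symbol `|ξ|^σ`, via Fourier inversion. -/
def Dop (σ : ℝ) (g : ℝ → ℂ) (x : ℝ) : ℂ :=
  ((1 / (2 * Real.pi) : ℝ) : ℂ) *
    ∫ ξ : ℝ, Complex.exp (-(Complex.I * ((x * ξ : ℝ) : ℂ))) *
      (((|ξ| ^ σ : ℝ) : ℂ) * FT1 g ξ)

open scoped ENNReal SchwartzMap FourierTransform

section Young

variable {α : Type*} [MeasurableSpace α] {μ : Measure α}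

theorem lintegral_mul_rpow_le {p : ℝ} (hp : 1 ≤ p) {f g : α → ℝ≥0∞}
    (hf : AEMeasurable f μ) (hg : AEMeasurable g μ) :
    (∫⁻ x, f x * g x ∂μ) ^ p ≤ (∫⁻ x, f x ∂μ) ^ (p - 1) * ∫⁻ x, f x * g x ^ p ∂μ := by
  have hp₀ : 0 < p := by linarith
  have hp₁ : p⁻¹ ≤ 1 := inv_le_one_of_one_le₀ hp
  have split : ∀ x, f x * g x = f x ^ (1 - p⁻¹) * (f x * g x ^ p) ^ p⁻¹ := fun x => by
    rw [ENNReal.mul_rpow_of_nonneg _ _ (by positivity), ENNReal.rpow_rpow_inv hp₀.ne', ← mul_assoc,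
      ← ENNReal.rpow_add_of_nonneg _ _ (by linarith) (by positivity), sub_add_cancel,
      ENNReal.rpow_one]
  calc (∫⁻ x, f x * g x ∂μ) ^ p
      = (∫⁻ x, f x ^ (1 - p⁻¹) * (f x * g x ^ p) ^ p⁻¹ ∂μ) ^ p := by simp_rw [← split]
    _ ≤ ((∫⁻ x, f x ∂μ) ^ (1 - p⁻¹) * (∫⁻ x, f x * g x ^ p ∂μ) ^ p⁻¹) ^ p := by
        gcongr
        exact ENNReal.lintegral_mul_norm_pow_le hf (by fun_prop) (by linarith) (by positivity)
          (by ring)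
    _ = (∫⁻ x, f x ∂μ) ^ (p - 1) * ∫⁻ x, f x * g x ^ p ∂μ := by
        rw [ENNReal.mul_rpow_of_nonneg _ _ hp₀.le, ENNReal.rpow_inv_rpow hp₀.ne',
          ← ENNReal.rpow_mul, sub_mul, inv_mul_cancel₀ hp₀.ne', one_mul]

variable {G : Type*} [AddGroup G] [MeasurableSpace G] [MeasurableAdd₂ G] [MeasurableNeg G]
  {μ : Measure G} [μ.IsAddLeftInvariant] [SFinite μ] {f g : G → ℝ≥0∞}

theorem lintegral_lconvolution (hf : Measurable f) (hg : Measurable g) :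
    ∫⁻ x, (f ⋆ₗ[μ] g) x ∂μ = (∫⁻ x, f x ∂μ) * ∫⁻ x, g x ∂μ := by
  simp only [lconvolution_def]
  rw [lintegral_lintegral_swap (by fun_prop), ← lintegral_mul_const _ hf]
  refine lintegral_congr fun y => ?_
  rw [lintegral_const_mul _ (by fun_prop), lintegral_add_left_eq_self]

theorem lintegral_lconvolution_rpow_le {p : ℝ} (hp : 1 ≤ p) (hf : Measurable f)
    (hg : Measurable g) :
    ∫⁻ x, (f ⋆ₗ[μ] g) x ^ p ∂μ ≤ (∫⁻ x, f x ∂μ) ^ p * ∫⁻ x, g x ^ p ∂μ := by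
  calc ∫⁻ x, (f ⋆ₗ[μ] g) x ^ p ∂μ
      ≤ ∫⁻ x, (∫⁻ y, f y ∂μ) ^ (p - 1) * (f ⋆ₗ[μ] fun y => g y ^ p) x ∂μ :=
        lintegral_mono fun x => lintegral_mul_rpow_le hp hf.aemeasurable (by fun_prop)
    _ = (∫⁻ x, f x ∂μ) ^ (p - 1) * ((∫⁻ x, f x ∂μ) ^ (1 : ℝ) * ∫⁻ x, g x ^ p ∂μ) := by
        rw [lintegral_const_mul _ (by fun_prop), lintegral_lconvolution hf (by fun_prop),
          ENNReal.rpow_one]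
    _ = (∫⁻ x, f x ∂μ) ^ p * ∫⁻ x, g x ^ p ∂μ := by
        rw [← mul_assoc, ← ENNReal.rpow_add_of_nonneg _ _ (by linarith) zero_le_one,
          sub_add_cancel]

end Young

theorem rpow_add_le_two_rpow_mul (x y : ℝ≥0∞) {b : ℝ} (hb : 0 ≤ b) :
    (x + y) ^ b ≤ 2 ^ b * (x ^ b + y ^ b) := by
  calc (x + y) ^ b ≤ (2 * max x y) ^ b := by
        gcongr
        rw [two_mul]
        exact add_le_add (le_max_left x y) (le_max_right x y)
    _ = 2 ^ b * max (x ^ b) (y ^ b) := by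
        rw [ENNReal.mul_rpow_of_nonneg _ _ hb, (ENNReal.monotone_rpow_of_nonneg hb).map_max]
    _ ≤ 2 ^ b * (x ^ b + y ^ b) := by gcongr; exact max_le_add_of_nonneg zero_le zero_le

section WeightedYoung

variable {E : Type*} [NormedAddCommGroup E]

theorem one_add_enorm_rpow_le (x y z : E) {b : ℝ} (hb : 0 ≤ b) :
    (1 + ‖x - z‖ₑ) ^ b ≤ 2 ^ b * (‖y‖ₑ ^ b + (1 + ‖-y + x - z‖ₑ) ^ b) := by
  refine le_trans ?_ (rpow_add_le_two_rpow_mul ‖y‖ₑ (1 + ‖-y + x - z‖ₑ) hb)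
  refine ENNReal.rpow_le_rpow ?_ hb
  calc 1 + ‖x - z‖ₑ = 1 + ‖y + (-y + x - z)‖ₑ := by congr 2; abel
    _ ≤ ‖y‖ₑ + (1 + ‖-y + x - z‖ₑ) := by
        rw [add_left_comm]
        gcongr
        exact enorm_add_le _ _

variable [MeasurableSpace E]

/-- The constant of the weighted Young inequality `lintegral_weight_mul_lconvolution_sq_le`, for
convolution with `k` on `L²` with weight `(1 + ‖x‖)^b`. For a Haar measure its last factor is finite
exactly when `2b` exceeds the dimension. -/
def weightedYoungConst (μ : Measure E) (b : ℝ) (k : E → ℝ≥0∞) : ℝ≥0∞ :=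
  2 ^ (2 * b + 1) * ((∫⁻ y, k y ∂μ) ^ 2 +
    (∫⁻ y, (‖y‖ₑ ^ b * k y) ^ 2 ∂μ) * ∫⁻ x, (1 + ‖x‖ₑ) ^ (-(2 * b)) ∂μ)

variable [BorelSpace E] [SecondCountableTopology E] {μ : Measure E} {k g : E → ℝ≥0∞} {b : ℝ}

theorem weight_mul_lconvolution_le (hk : Measurable k) (hg : Measurable g) (hb : 0 ≤ b)
    (x z : E) :
    (1 + ‖x - z‖ₑ) ^ b * (k ⋆ₗ[μ] g) x ≤
      2 ^ b * (((fun y => ‖y‖ₑ ^ b * k y) ⋆ₗ[μ] g) x +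
        (k ⋆ₗ[μ] fun y => (1 + ‖y - z‖ₑ) ^ b * g y) x) := by
  simp only [lconvolution_def]
  rw [← lintegral_add_left (by fun_prop), ← lintegral_const_mul _ (by fun_prop),
    ← lintegral_const_mul _ (by fun_prop)]
  refine lintegral_mono fun y => ?_
  calc (1 + ‖x - z‖ₑ) ^ b * (k y * g (-y + x))
      ≤ 2 ^ b * (‖y‖ₑ ^ b + (1 + ‖-y + x - z‖ₑ) ^ b) * (k y * g (-y + x)) := by
        gcongr
        exact one_add_enorm_rpow_le x y z hb
    _ = _ := by ring

theorem weight_mul_lconvolution_sq_le (hk : Measurable k) (hg : Measurable g) (hb : 0 ≤ b)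
    (x z : E) :
    ((1 + ‖x - z‖ₑ) ^ b * (k ⋆ₗ[μ] g) x) ^ 2 ≤
      2 ^ (2 * b + 1) * (((fun y => ‖y‖ₑ ^ b * k y) ⋆ₗ[μ] g) x ^ 2 +
        (k ⋆ₗ[μ] fun y => (1 + ‖y - z‖ₑ) ^ b * g y) x ^ 2) := by
  set u := ((fun y => ‖y‖ₑ ^ b * k y) ⋆ₗ[μ] g) x
  set v := (k ⋆ₗ[μ] fun y => (1 + ‖y - z‖ₑ) ^ b * g y) x
  have add_sq_le : (u + v) ^ 2 ≤ 2 * (u ^ 2 + v ^ 2) := by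
    have h := ENNReal.rpow_add_le_mul_rpow_add_rpow u v one_le_two
    norm_num at h
    exact h
  calc ((1 + ‖x - z‖ₑ) ^ b * (k ⋆ₗ[μ] g) x) ^ 2
      ≤ (2 ^ b * (u + v)) ^ 2 := pow_le_pow_left' (weight_mul_lconvolution_le hk hg hb x z) 2
    _ ≤ (2 ^ b) ^ 2 * (2 * (u ^ 2 + v ^ 2)) := by
        rw [mul_pow]
        gcongr
    _ = 2 ^ (2 * b + 1) * (u ^ 2 + v ^ 2) := by
        rw [ENNReal.rpow_add _ _ (by simp) (by simp), mul_comm 2 b, ENNReal.rpow_mul,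
          ENNReal.rpow_two, ENNReal.rpow_one, mul_assoc]

theorem lintegral_sq_le_mul_lintegral_weight_mul_sq [μ.IsAddRightInvariant] (hg : Measurable g)
    (b : ℝ) (z : E) :
    (∫⁻ x, g x ∂μ) ^ 2 ≤
      (∫⁻ x, (1 + ‖x‖ₑ) ^ (-(2 * b)) ∂μ) * ∫⁻ x, ((1 + ‖x - z‖ₑ) ^ b * g x) ^ 2 ∂μ := by
  have cancel : ∀ (w : E) (r : ℝ), (1 + ‖w‖ₑ) ^ (-r) * (1 + ‖w‖ₑ) ^ r = 1 := fun w r => by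
    rw [← ENNReal.rpow_add _ _ (by simp) (by simp), neg_add_cancel, ENNReal.rpow_zero]
  have double : ∀ w : E, (1 + ‖w‖ₑ) ^ (2 * b) = ((1 + ‖w‖ₑ) ^ b) ^ 2 := fun w => by
    rw [mul_comm, ENNReal.rpow_mul, ENNReal.rpow_two]
  have jensen := lintegral_mul_rpow_le (μ := μ) one_le_two
    (f := fun x => (1 + ‖x - z‖ₑ) ^ (-(2 * b))) (g := fun x => (1 + ‖x - z‖ₑ) ^ (2 * b) * g x)
    (by fun_prop) (by fun_prop)
  rw [lintegral_sub_right_eq_self (fun x => (1 + ‖x‖ₑ) ^ (-(2 * b)))] at jensen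
  norm_num [← mul_assoc, cancel] at jensen
  refine jensen.trans_eq ?_
  congr 2 with x
  rw [mul_pow, sq ((1 + ‖x - z‖ₑ) ^ (2 * b)), ← mul_assoc, ← mul_assoc, cancel, one_mul, double,
    mul_pow]

theorem lintegral_weight_mul_lconvolution_sq_le [μ.IsAddLeftInvariant] [μ.IsNegInvariant]
    [SFinite μ] (hk : Measurable k) (hg : Measurable g) (hb : 0 ≤ b) (z : E) :
    ∫⁻ x, ((1 + ‖x - z‖ₑ) ^ b * (k ⋆ₗ[μ] g) x) ^ 2 ∂μ ≤
      weightedYoungConst μ b k * ∫⁻ x, ((1 + ‖x - z‖ₑ) ^ b * g x) ^ 2 ∂μ := by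
  set m : E → ℝ≥0∞ := fun y => ‖y‖ₑ ^ b * k y
  set h : E → ℝ≥0∞ := fun x => (1 + ‖x - z‖ₑ) ^ b * g x
  have hm : Measurable m := by fun_prop
  have hh : Measurable h := by fun_prop
  have young : ∀ {u v : E → ℝ≥0∞}, Measurable u → Measurable v →
      ∫⁻ x, (u ⋆ₗ[μ] v) x ^ 2 ∂μ ≤ (∫⁻ x, u x ∂μ) ^ 2 * ∫⁻ x, v x ^ 2 ∂μ := fun hu hv => by
    simpa only [ENNReal.rpow_two] using lintegral_lconvolution_rpow_le one_le_two hu hv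
  calc ∫⁻ x, ((1 + ‖x - z‖ₑ) ^ b * (k ⋆ₗ[μ] g) x) ^ 2 ∂μ
      ≤ ∫⁻ x, 2 ^ (2 * b + 1) * ((m ⋆ₗ[μ] g) x ^ 2 + (k ⋆ₗ[μ] h) x ^ 2) ∂μ :=
        lintegral_mono fun x => weight_mul_lconvolution_sq_le hk hg hb x z
    _ = 2 ^ (2 * b + 1) *
          (∫⁻ x, (g ⋆ₗ[μ] m) x ^ 2 ∂μ + ∫⁻ x, (k ⋆ₗ[μ] h) x ^ 2 ∂μ) := by
        rw [lintegral_const_mul _ (by fun_prop), lintegral_add_left (by fun_prop),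
          lconvolution_comm (f := m)]
    _ ≤ 2 ^ (2 * b + 1) * ((∫⁻ x, (1 + ‖x‖ₑ) ^ (-(2 * b)) ∂μ) * (∫⁻ x, h x ^ 2 ∂μ) *
          (∫⁻ y, m y ^ 2 ∂μ) + (∫⁻ y, k y ∂μ) ^ 2 * ∫⁻ x, h x ^ 2 ∂μ) := by
        gcongr
        · refine (young hg hm).trans ?_
          gcongr
          exact lintegral_sq_le_mul_lintegral_weight_mul_sq hg b z
        · exact young hk hh
    _ = weightedYoungConst μ b k * ∫⁻ x, h x ^ 2 ∂μ := by
        rw [weightedYoungConst]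
        ring

end WeightedYoung

theorem ofReal_one_add_norm_rpow {E : Type*} [SeminormedAddGroup E] (x : E) (r : ℝ) :
    ENNReal.ofReal ((1 + ‖x‖) ^ r) = (1 + ‖x‖ₑ) ^ r := by
  rw [← ENNReal.ofReal_rpow_of_pos (by positivity), ENNReal.ofReal_add zero_le_one (norm_nonneg x),
    ENNReal.ofReal_one, ofReal_norm]

theorem lintegral_comp_mul_left (f : ℝ → ℝ≥0∞) {c : ℝ} (hc : c ≠ 0) :
    ∫⁻ x, f (c * x) = ENNReal.ofReal |c⁻¹| * ∫⁻ x, f x := by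
  have h := lintegral_map_equiv (μ := volume) f (Homeomorph.mulLeft₀ c hc).toMeasurableEquiv
  rw [← smul_eq_mul, ← lintegral_smul_measure, ← Real.map_volume_mul_left hc]
  exact h.symm

theorem weightedYoungConst_dilation_le (k : ℝ → ℝ≥0∞) {b : ℝ} (hb : 1 / 2 ≤ b) {δ : ℝ}
    (hδ : δ ∈ Set.Ioc 0 1) :
    weightedYoungConst volume b (fun y => ENNReal.ofReal δ * k (δ * y)) ≤
      ENNReal.ofReal (δ ^ (1 - 2 * b)) * weightedYoungConst volume b k := by
  obtain ⟨hδ₀, hδ₁⟩ := hδ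
  set c := ENNReal.ofReal δ
  have hc₀ : c ≠ 0 := by simpa [c] using hδ₀
  have hc₁ : c ≤ 1 := ENNReal.ofReal_le_one.2 hδ₁
  have hc : c ≠ ⊤ := ENNReal.ofReal_ne_top
  have hinv : ENNReal.ofReal |δ⁻¹| = c⁻¹ := by
    rw [abs_of_pos (inv_pos.2 hδ₀), ENNReal.ofReal_inv_of_pos hδ₀]
  have l1_norm : ∫⁻ y, c * k (δ * y) = ∫⁻ y, k y := by
    rw [lintegral_const_mul' _ _ hc, lintegral_comp_mul_left k hδ₀.ne', hinv, ← mul_assoc,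
      ENNReal.mul_inv_cancel hc₀ hc, one_mul]
  have sobolev_integrand : ∀ y, (‖y‖ₑ ^ b * (c * k (δ * y))) ^ 2 =
      c ^ (2 - 2 * b) * (‖δ * y‖ₑ ^ b * k (δ * y)) ^ 2 := fun y => by
    have hc' : c ^ (2 - 2 * b) * (c ^ b) ^ 2 = c ^ 2 := by
      rw [← ENNReal.rpow_two, ← ENNReal.rpow_mul, ← ENNReal.rpow_add _ _ hc₀ hc,
        ← ENNReal.rpow_two]
      ring_nf
    rw [enorm_mul, Real.enorm_of_nonneg hδ₀.le, ENNReal.mul_rpow_of_nonneg _ _ (by linarith)]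
    simp only [mul_pow]
    rw [mul_left_comm, ← hc']
    ring
  have sobolev_norm : ∫⁻ y, (‖y‖ₑ ^ b * (c * k (δ * y))) ^ 2 =
      c ^ (1 - 2 * b) * ∫⁻ y, (‖y‖ₑ ^ b * k y) ^ 2 := by
    simp_rw [sobolev_integrand]
    rw [lintegral_const_mul' _ _ (by finiteness),
      lintegral_comp_mul_left (fun y => (‖y‖ₑ ^ b * k y) ^ 2) hδ₀.ne', hinv, ← mul_assoc,
      ← ENNReal.rpow_neg_one, ← ENNReal.rpow_add _ _ hc₀ hc]
    ring_nf
  have one_le : 1 ≤ c ^ (1 - 2 * b) := by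
    simpa only [ENNReal.rpow_zero] using
      ENNReal.rpow_le_rpow_of_exponent_ge hc₁ (by linarith : 1 - 2 * b ≤ 0)
  rw [← ENNReal.ofReal_rpow_of_pos hδ₀, weightedYoungConst, weightedYoungConst, l1_norm,
    sobolev_norm, mul_left_comm (c ^ _), mul_add (c ^ _), mul_assoc (c ^ _)]
  gcongr
  exact le_mul_of_one_le_left' one_le

section PolynomialGrowth

variable {E F : Type*} [NormedAddCommGroup E] [NormedSpace ℝ E] [NormedAddCommGroup F]
  [NormedSpace ℝ F]

theorem exists_one_add_enorm_rpow_mul_enorm_le (G : 𝓢(E, F)) (r : ℝ) :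
    ∃ M : ℝ, ∀ x, (1 + ‖x‖ₑ) ^ r * ‖G x‖ₑ ≤ ENNReal.ofReal M := by
  set N := ⌈r⌉₊
  refine ⟨2 ^ N * (Finset.Iic (N, 0)).sup (fun m => SchwartzMap.seminorm ℝ m.1 m.2) G,
    fun x => ?_⟩
  rw [← ofReal_one_add_norm_rpow, ← ofReal_norm, ← ENNReal.ofReal_mul (by positivity)]
  refine ENNReal.ofReal_le_ofReal ?_
  calc (1 + ‖x‖) ^ r * ‖G x‖ ≤ (1 + ‖x‖) ^ N * ‖G x‖ := by
        rw [← Real.rpow_natCast]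
        gcongr
        · linarith [norm_nonneg x]
        · exact Nat.le_ceil r
    _ ≤ 2 ^ N * (Finset.Iic (N, 0)).sup (fun m => SchwartzMap.seminorm ℝ m.1 m.2) G := by
        simpa using SchwartzMap.one_add_le_sup_seminorm_apply (𝕜 := ℝ) (m := (N, 0)) le_rfl le_rfl
          G x

variable [MeasurableSpace E]

theorem lintegral_mul_enorm_sq_lt_top [BorelSpace E] [SecondCountableTopology E] {μ : Measure E}
    [μ.HasTemperateGrowth] (G : 𝓢(E, F)) {w : E → ℝ≥0∞} {C : ℝ≥0∞} (hC : C ≠ ⊤) {r : ℝ}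
    (hw : ∀ x, w x ≤ C * (1 + ‖x‖ₑ) ^ r) :
    ∫⁻ x, w x * ‖G x‖ₑ ^ 2 ∂μ < ⊤ := by
  obtain ⟨M, hM⟩ := exists_one_add_enorm_rpow_mul_enorm_le G r
  calc ∫⁻ x, w x * ‖G x‖ₑ ^ 2 ∂μ ≤ ∫⁻ x, C * ENNReal.ofReal M * ‖G x‖ₑ ∂μ := by
        refine lintegral_mono fun x => ?_
        calc w x * ‖G x‖ₑ ^ 2 ≤ C * (1 + ‖x‖ₑ) ^ r * ‖G x‖ₑ ^ 2 := by gcongr; exact hw x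
          _ = C * ((1 + ‖x‖ₑ) ^ r * ‖G x‖ₑ) * ‖G x‖ₑ := by ring
          _ ≤ C * ENNReal.ofReal M * ‖G x‖ₑ := by gcongr; exact hM x
    _ = C * ENNReal.ofReal M * ∫⁻ x, ‖G x‖ₑ ∂μ := lintegral_const_mul' _ _ (by finiteness)
    _ < ⊤ := ENNReal.mul_lt_top (by finiteness) G.integrable.2

theorem weightedYoungConst_schwartz_lt_top [BorelSpace E] [FiniteDimensional ℝ E] {μ : Measure E}
    [μ.IsAddHaarMeasure] (G : 𝓢(E, F)) {b : ℝ} (hb : Module.finrank ℝ E < 2 * b) :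
    weightedYoungConst μ b (fun y => ‖G y‖ₑ) < ⊤ := by
  have hb₀ : 0 ≤ b := by linarith [(Nat.cast_nonneg (Module.finrank ℝ E) : (0 : ℝ) ≤ _)]
  have l1_norm : ∫⁻ y, ‖G y‖ₑ ∂μ < ⊤ := G.integrable.2
  have sobolev_norm : ∫⁻ y, (‖y‖ₑ ^ b * ‖G y‖ₑ) ^ 2 ∂μ < ⊤ := by
    simp only [mul_pow]
    refine lintegral_mul_enorm_sq_lt_top G ENNReal.one_ne_top (r := b * 2) fun y => ?_
    rw [one_mul, ← ENNReal.rpow_two, ← ENNReal.rpow_mul]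
    gcongr
    exact le_add_self
  have weight : ∫⁻ x, (1 + ‖x‖ₑ) ^ (-(2 * b)) ∂μ < ⊤ := by
    simpa only [ofReal_one_add_norm_rpow] using finite_integral_one_add_norm (μ := μ) hb
  rw [weightedYoungConst]
  finiteness

end PolynomialGrowth

theorem FT1_eq_fourier (f : ℝ → ℂ) (ξ : ℝ) : FT1 f ξ = 𝓕 f (-(2 * Real.pi)⁻¹ * ξ) := by
  rw [FT1, Real.fourier_eq']
  refine integral_congr_ae (.of_forall fun x => ?_)
  simp only [RCLike.inner_apply, conj_trivial, smul_eq_mul]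
  congr 2
  push_cast
  field_simp

theorem exists_schwartz_FT1_neg_eq (Ψ : 𝓢(ℝ, ℂ)) : ∃ κ : 𝓢(ℝ, ℂ), ∀ t, FT1 κ (-t) = Ψ t := by
  let dilation : ℝ ≃L[ℝ] ℝ :=
    ContinuousLinearEquiv.smulLeft (Units.mk0 (2 * Real.pi) Real.two_pi_pos.ne')
  refine ⟨𝓕⁻ (SchwartzMap.compCLMOfContinuousLinearEquiv ℂ dilation Ψ), fun t => ?_⟩
  have dilation_inv : dilation ((2 * Real.pi)⁻¹ * t) = t :=
    mul_inv_cancel_left₀ Real.two_pi_pos.ne' t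
  rw [FT1_eq_fourier, neg_mul_neg, ← SchwartzMap.fourier_coe,
    FourierTransform.fourier_fourierInv_eq, SchwartzMap.compCLMOfContinuousLinearEquiv_apply,
    Function.comp_apply, dilation_inv]

theorem FT1_dilation (κ : ℝ → ℂ) {δ : ℝ} (hδ : 0 < δ) (ξ : ℝ) :
    FT1 (fun y => δ * κ (δ * y)) ξ = FT1 κ (ξ / δ) := by
  set F : ℝ → ℂ := fun y => Complex.exp (I * ((y * (ξ / δ) : ℝ) : ℂ)) * κ y
  calc FT1 (fun y => δ * κ (δ * y)) ξ = ∫ y, δ • F (δ * y) := by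
        refine integral_congr_ae (.of_forall fun y => ?_)
        simp only [F, real_smul]
        rw [mul_left_comm, mul_right_comm δ, mul_div_cancel₀ _ hδ.ne', mul_comm ξ]
    _ = FT1 κ (ξ / δ) := by
        rw [integral_smul, Measure.integral_comp_mul_left, abs_of_pos (inv_pos.2 hδ),
          smul_inv_smul₀ hδ.ne', FT1]

theorem exists_schwartz_eq_FT2 (f : 𝓢(ℝ × ℝ, ℂ)) :
    ∃ G : 𝓢(ℝ × ℝ, ℂ), ∀ ξ lam, G (ξ, lam) = FT2 f ξ lam := by
  -- The sup norm on `ℝ × ℝ` is not Euclidean, so the transform is taken on `ℂ` instead.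
  let e := Complex.equivRealProdCLM
  let dilation : ℂ ≃L[ℝ] ℂ := ContinuousLinearEquiv.smulLeft
    (Units.mk0 (-(2 * Real.pi)⁻¹) (neg_ne_zero.2 (inv_ne_zero Real.two_pi_pos.ne')))
  let F : 𝓢(ℂ, ℂ) := SchwartzMap.compCLMOfContinuousLinearEquiv ℂ e f
  refine ⟨SchwartzMap.compCLMOfContinuousLinearEquiv ℂ (e.symm.trans dilation) (𝓕 F),
    fun ξ lam => ?_⟩
  rw [SchwartzMap.compCLMOfContinuousLinearEquiv_apply, Function.comp_apply,
    SchwartzMap.fourier_coe, Real.fourier_eq', FT2,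
    ← Complex.volume_preserving_equiv_real_prod.integral_comp
      Complex.measurableEquivRealProd.measurableEmbedding]
  refine integral_congr_ae (.of_forall fun z => ?_)
  have phase : -2 * Real.pi * inner ℝ z ((e.symm.trans dilation) (ξ, lam)) =
      z.re * ξ + z.im * lam := by
    change -2 * Real.pi * inner ℝ z (-(2 * Real.pi)⁻¹ • Complex.equivRealProdCLM.symm (ξ, lam)) = _
    rw [inner_smul_right, Complex.inner]
    simp only [neg_mul, mul_inv_rev, mul_re, equivRealProdCLM_symm_apply_re, conj_re,
      equivRealProdCLM_symm_apply_im, conj_im, mul_neg, sub_neg_eq_add, neg_neg]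
    field_simp
  simp only [phase, smul_eq_mul]
  rw [mul_comm _ I]
  rfl

theorem measurable_uncurry_FT2 (f : 𝓢(ℝ × ℝ, ℂ)) : Measurable (Function.uncurry (FT2 f)) := by
  obtain ⟨G, hG⟩ := exists_schwartz_eq_FT2 f
  rw [← show ⇑G = Function.uncurry (FT2 f) from funext fun p => hG p.1 p.2]
  exact G.continuous.measurable

theorem FT2_FT1_neg_mul {κ : ℝ → ℂ} {f : ℝ × ℝ → ℂ} (hκ : Integrable κ) (hf : Integrable f)
    (ξ lam : ℝ) :
    FT2 (fun p => FT1 κ (-p.2) * f p) ξ lam = ∫ y, κ y * FT2 f ξ (lam - y) := by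
  have integrable : Integrable (Function.uncurry fun (p : ℝ × ℝ) (y : ℝ) =>
      Complex.exp (I * ((p.1 * ξ + p.2 * (lam - y) : ℝ) : ℂ)) * (f p * κ y))
      ((volume : Measure (ℝ × ℝ)).prod (volume : Measure ℝ)) := by
    refine (hf.mul_prod hκ).bdd_mul (c := 1) ?_ (.of_forall fun q => ?_)
    · exact Continuous.aestronglyMeasurable (by fun_prop)
    · rw [mul_comm, Complex.norm_exp_ofReal_mul_I]
  calc FT2 (fun p => FT1 κ (-p.2) * f p) ξ lam
      = ∫ p : ℝ × ℝ, ∫ y : ℝ,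
          Complex.exp (I * ((p.1 * ξ + p.2 * (lam - y) : ℝ) : ℂ)) * (f p * κ y) := by
        refine integral_congr_ae (.of_forall fun p => ?_)
        simp only [FT1]
        rw [← integral_mul_const, ← integral_const_mul]
        refine integral_congr_ae (.of_forall fun y => ?_)
        have phase : Complex.exp (I * ((p.1 * ξ + p.2 * (lam - y) : ℝ) : ℂ)) =
            Complex.exp (I * ((p.1 * ξ + p.2 * lam : ℝ) : ℂ)) *
              Complex.exp (I * ((y * -p.2 : ℝ) : ℂ)) := by
          rw [← Complex.exp_add, ← mul_add, ← Complex.ofReal_add]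
          ring_nf
        simp only [phase]
        ring
    _ = ∫ y, κ y * FT2 f ξ (lam - y) := by
        rw [integral_integral_swap integrable]
        refine integral_congr_ae (.of_forall fun y => ?_)
        simp only [FT2]
        rw [← integral_const_mul]
        refine integral_congr_ae (.of_forall fun p => ?_)
        ring

section BourgainSpaces

variable {ω : ℝ → ℝ} {b s : ℝ}

/-- The `X^{b,s}` (Bourgain space) norm `‖(1 + |λ - ω(ξ)|)^b (1 + |ξ|)^s f̂(ξ, λ)‖_{L²}` of a
general symbol `ω`; for `ω = disp a` it is `XtildeNorm a b s`. -/
def bourgainNorm (ω : ℝ → ℝ) (b s : ℝ) (f : ℝ × ℝ → ℂ) : ℝ :=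
  (∫ p : ℝ × ℝ, (1 + |p.2 - ω p.1|) ^ (2 * b) * (1 + |p.1|) ^ (2 * s) *
    ‖FT2 f p.1 p.2‖ ^ 2) ^ ((1 : ℝ) / 2)

/-- The square of `bourgainNorm`, as a functional of the space-time Fourier transform `F` and with
values in `[0, ∞]`, so that it makes sense for every `F`. -/
def bourgainEnergy (ω : ℝ → ℝ) (b s : ℝ) (F : ℝ → ℝ → ℂ) : ℝ≥0∞ :=
  ∫⁻ p : ℝ × ℝ, (1 + ‖p.1‖ₑ) ^ (2 * s) * ((1 + ‖p.2 - ω p.1‖ₑ) ^ b * ‖F p.1 p.2‖ₑ) ^ 2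

theorem lintegral_bourgain_integrand (f : ℝ × ℝ → ℂ) :
    ∫⁻ p : ℝ × ℝ, ENNReal.ofReal ((1 + |p.2 - ω p.1|) ^ (2 * b) * (1 + |p.1|) ^ (2 * s) *
      ‖FT2 f p.1 p.2‖ ^ 2) = bourgainEnergy ω b s (FT2 f) := by
  refine lintegral_congr fun p => ?_
  rw [ENNReal.ofReal_mul (by positivity), ENNReal.ofReal_mul (by positivity),
    ENNReal.ofReal_pow (norm_nonneg _), ofReal_norm, ← Real.norm_eq_abs, ← Real.norm_eq_abs,
    ofReal_one_add_norm_rpow, ofReal_one_add_norm_rpow, mul_comm 2 b, ENNReal.rpow_mul,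
    ENNReal.rpow_two]
  ring

theorem bourgainNorm_le (f : ℝ × ℝ → ℂ) :
    bourgainNorm ω b s f ≤ (bourgainEnergy ω b s (FT2 f)).toReal ^ ((1 : ℝ) / 2) := by
  refine Real.rpow_le_rpow (integral_nonneg fun p => by positivity) ?_ (by norm_num)
  refine (Real.le_norm_self _).trans ((norm_integral_le_lintegral_norm _).trans_eq ?_)
  rw [← lintegral_bourgain_integrand]
  congr 2 with p
  rw [Real.norm_of_nonneg (by positivity)]

theorem bourgainNorm_eq (hω : Measurable ω) (f : 𝓢(ℝ × ℝ, ℂ)) :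
    bourgainNorm ω b s f = (bourgainEnergy ω b s (FT2 f)).toReal ^ ((1 : ℝ) / 2) := by
  have meas_FT2 : Measurable fun p : ℝ × ℝ => FT2 f p.1 p.2 := measurable_uncurry_FT2 f
  rw [bourgainNorm, integral_eq_lintegral_of_nonneg_ae (.of_forall fun p => by positivity)
    (by fun_prop), lintegral_bourgain_integrand]

theorem one_add_abs_sub_le {C r : ℝ} (hgrowth : ∀ ξ, |ω ξ| ≤ C * (1 + |ξ|) ^ r) (p : ℝ × ℝ) :
    1 + |p.2 - ω p.1| ≤ (1 + |C|) * (1 + ‖p‖) ^ (1 + |r|) := by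
  have hfst : |p.1| ≤ ‖p‖ := norm_fst_le p
  have hsnd : |p.2| ≤ ‖p‖ := norm_snd_le p
  have le_rpow : 1 + ‖p‖ ≤ (1 + ‖p‖) ^ (1 + |r|) :=
    Real.self_le_rpow_of_one_le (by linarith [norm_nonneg p]) (by linarith [abs_nonneg r])
  have symbol_le : |ω p.1| ≤ |C| * (1 + ‖p‖) ^ (1 + |r|) :=
    calc |ω p.1| ≤ C * (1 + |p.1|) ^ r := hgrowth p.1
      _ ≤ |C| * (1 + |p.1|) ^ (1 + |r|) := by
          gcongr
          · exact le_abs_self C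
          · linarith [abs_nonneg p.1]
          · linarith [le_abs_self r]
      _ ≤ |C| * (1 + ‖p‖) ^ (1 + |r|) := by gcongr
  linarith [abs_sub p.2 (ω p.1)]

theorem bourgain_weight_le {C r : ℝ} (hgrowth : ∀ ξ, |ω ξ| ≤ C * (1 + |ξ|) ^ r) (hb : 0 ≤ b)
    (p : ℝ × ℝ) :
    (1 + |p.1|) ^ (2 * s) * (1 + |p.2 - ω p.1|) ^ (b * 2) ≤
      (1 + |C|) ^ (b * 2) * (1 + ‖p‖) ^ (|2 * s| + (1 + |r|) * (b * 2)) := by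
  have space_le : (1 + |p.1|) ^ (2 * s) ≤ (1 + ‖p‖) ^ |2 * s| :=
    calc (1 + |p.1|) ^ (2 * s) ≤ (1 + |p.1|) ^ |2 * s| :=
          Real.rpow_le_rpow_of_exponent_le (by linarith [abs_nonneg p.1]) (le_abs_self _)
      _ ≤ (1 + ‖p‖) ^ |2 * s| := by
          gcongr
          exact norm_fst_le p
  calc (1 + |p.1|) ^ (2 * s) * (1 + |p.2 - ω p.1|) ^ (b * 2)
      ≤ (1 + ‖p‖) ^ |2 * s| * ((1 + |C|) * (1 + ‖p‖) ^ (1 + |r|)) ^ (b * 2) := by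
        gcongr
        exact one_add_abs_sub_le hgrowth p
    _ = (1 + |C|) ^ (b * 2) * (1 + ‖p‖) ^ (|2 * s| + (1 + |r|) * (b * 2)) := by
        rw [Real.mul_rpow (by positivity) (by positivity), ← Real.rpow_mul (by positivity),
          Real.rpow_add (by positivity), mul_left_comm]

theorem bourgainEnergy_lt_top {C r : ℝ} (hgrowth : ∀ ξ, |ω ξ| ≤ C * (1 + |ξ|) ^ r)
    (hb : 0 ≤ b) (s : ℝ) (f : 𝓢(ℝ × ℝ, ℂ)) : bourgainEnergy ω b s (FT2 f) < ⊤ := by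
  obtain ⟨G, hG⟩ := exists_schwartz_eq_FT2 f
  simp only [bourgainEnergy, ← hG, mul_pow, ← mul_assoc]
  refine lintegral_mul_enorm_sq_lt_top G (C := ENNReal.ofReal ((1 + |C|) ^ (b * 2)))
    (r := |2 * s| + (1 + |r|) * (b * 2)) ENNReal.ofReal_ne_top fun p => ?_
  rw [← ENNReal.rpow_two, ← ENNReal.rpow_mul, ← ofReal_one_add_norm_rpow,
    ← ofReal_one_add_norm_rpow, ← ofReal_one_add_norm_rpow, ← ENNReal.ofReal_mul (by positivity),
    ← ENNReal.ofReal_mul (by positivity)]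
  exact ENNReal.ofReal_le_ofReal (bourgain_weight_le hgrowth hb p)

theorem bourgainEnergy_le_of_enorm_le_lconvolution {F G : ℝ → ℝ → ℂ} {k : ℝ → ℝ≥0∞}
    (hω : Measurable ω) (hk : Measurable k) (hG : Measurable (Function.uncurry G)) (hb : 0 ≤ b)
    (hF : ∀ ξ lam, ‖F ξ lam‖ₑ ≤ (k ⋆ₗ[volume] fun l => ‖G ξ l‖ₑ) lam) :
    bourgainEnergy ω b s F ≤ weightedYoungConst volume b k * bourgainEnergy ω b s G := by
  have meas_G : Measurable fun p : ℝ × ℝ => G p.1 p.2 := hG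
  calc bourgainEnergy ω b s F
      ≤ ∫⁻ ξ, ∫⁻ lam, (1 + ‖ξ‖ₑ) ^ (2 * s) * ((1 + ‖lam - ω ξ‖ₑ) ^ b * ‖F ξ lam‖ₑ) ^ 2 :=
        lintegral_prod_le _
    _ ≤ ∫⁻ ξ, (1 + ‖ξ‖ₑ) ^ (2 * s) * (weightedYoungConst volume b k *
          ∫⁻ lam, ((1 + ‖lam - ω ξ‖ₑ) ^ b * ‖G ξ lam‖ₑ) ^ 2) := by
        refine lintegral_mono fun ξ => ?_
        have meas_fibre : Measurable fun lam => ‖G ξ lam‖ₑ := hG.of_uncurry_left.enorm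
        refine (lintegral_const_mul' _ _ (by finiteness)).trans_le ?_
        gcongr
        refine le_trans (lintegral_mono fun lam => ?_)
          (lintegral_weight_mul_lconvolution_sq_le hk meas_fibre hb (ω ξ))
        gcongr
        exact hF ξ lam
    _ = weightedYoungConst volume b k * bourgainEnergy ω b s G := by
        rw [bourgainEnergy, Measure.volume_eq_prod, lintegral_prod _ (by fun_prop),
          ← lintegral_const_mul _ (by fun_prop)]
        refine lintegral_congr fun ξ => ?_
        rw [mul_left_comm, ← lintegral_const_mul' _ _ (by finiteness)]

end BourgainSpaces

theorem measurable_disp (a : ℝ) : Measurable (disp a) := by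
  unfold disp
  fun_prop

theorem abs_disp_le {a : ℝ} (ha : -1 ≤ a) (ξ : ℝ) : |disp a ξ| ≤ (1 + |ξ|) ^ (2 + a) := by
  have abs_le : |ξ| ≤ 1 + |ξ| := by linarith
  calc |disp a ξ| = |ξ| * |ξ| ^ (1 + a) := by
        rw [disp, abs_mul, abs_of_nonneg (by positivity : 0 ≤ |ξ| ^ (1 + a))]
    _ ≤ (1 + |ξ|) * (1 + |ξ|) ^ (1 + a) := by
        gcongr
        linarith
    _ = (1 + |ξ|) ^ (2 + a) := by
        rw [← Real.rpow_one_add' (by positivity) (by linarith)]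
        ring_nf

theorem TimeCutoff.exists_schwartz_eq {ψ : ℝ → ℝ} (hψ : TimeCutoff ψ) :
    ∃ Ψ : 𝓢(ℝ, ℂ), ∀ t, Ψ t = ψ t := by
  have compact_support : HasCompactSupport fun t => (ψ t : ℂ) := by
    refine HasCompactSupport.intro (isCompact_Icc (a := (-1 : ℝ)) (b := 1)) fun t ht => ?_
    contrapose! ht
    exact abs_le.1 (hψ.supp t (by exact_mod_cast ht))
  exact ⟨compact_support.toSchwartzMap (Complex.ofRealCLM.contDiff.comp hψ.smooth), fun _ => rfl⟩

theorem bourgainEnergy_time_dilation_mul_le {ω : ℝ → ℝ} (hω : Measurable ω) {b : ℝ}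
    (hb : 1 / 2 ≤ b) (s : ℝ) {κ Ψ : 𝓢(ℝ, ℂ)} (hκ : ∀ t, FT1 κ (-t) = Ψ t) {δ : ℝ}
    (hδ : δ ∈ Set.Ioc 0 1) (f : 𝓢(ℝ × ℝ, ℂ)) :
    bourgainEnergy ω b s (FT2 fun p => Ψ (p.2 / δ) * f p) ≤ ENNReal.ofReal (δ ^ (1 - 2 * b)) *
      weightedYoungConst volume b (fun y => ‖κ y‖ₑ) * bourgainEnergy ω b s (FT2 f) := by
  set k : ℝ → ℝ≥0∞ := fun y => ENNReal.ofReal δ * ‖κ (δ * y)‖ₑ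
  have cutoff_eq : ∀ t, Ψ (t / δ) = FT1 (fun y => δ * κ (δ * y)) (-t) := fun t => by
    rw [FT1_dilation _ hδ.1, neg_div, hκ]
  have integrable_kernel : Integrable fun y : ℝ => (δ : ℂ) * κ (δ * y) :=
    (κ.integrable.comp_mul_left' hδ.1.ne').const_mul _
  have measurable_kernel : Measurable k := by
    have : Measurable κ := κ.continuous.measurable
    fun_prop
  have convolution_bound : ∀ ξ lam, ‖FT2 (fun p => Ψ (p.2 / δ) * f p) ξ lam‖ₑ ≤
      (k ⋆ₗ[volume] fun l => ‖FT2 f ξ l‖ₑ) lam := fun ξ lam => by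
    simp only [cutoff_eq]
    rw [FT2_FT1_neg_mul integrable_kernel f.integrable]
    refine (enorm_integral_le_lintegral_enorm _).trans_eq (lintegral_congr fun y => ?_)
    rw [enorm_mul, enorm_mul, neg_add_eq_sub, ← ofReal_norm (δ : ℂ), norm_real,
      Real.norm_of_nonneg hδ.1.le]
  calc bourgainEnergy ω b s (FT2 fun p => Ψ (p.2 / δ) * f p)
      ≤ weightedYoungConst volume b k * bourgainEnergy ω b s (FT2 f) :=
        bourgainEnergy_le_of_enorm_le_lconvolution hω measurable_kernel
          (measurable_uncurry_FT2 f) (by linarith) convolution_bound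
    _ ≤ _ := by
        gcongr
        exact weightedYoungConst_dilation_le (fun y => ‖κ y‖ₑ) hb hδ

theorem statement17_general {ω : ℝ → ℝ} (hω : Measurable ω) {A r : ℝ}
    (hgrowth : ∀ ξ, |ω ξ| ≤ A * (1 + |ξ|) ^ r) (s : ℝ) {b : ℝ} (hb : 1 / 2 < b) (Ψ : 𝓢(ℝ, ℂ)) :
    ∃ C > 0, ∀ δ ∈ Set.Ioc (0 : ℝ) 1, ∀ f : 𝓢(ℝ × ℝ, ℂ),
      bourgainNorm ω b s (fun p => Ψ (p.2 / δ) * f p) ≤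
        C * δ ^ (1 / 2 - b) * bourgainNorm ω b s f := by
  obtain ⟨κ, hκ⟩ := exists_schwartz_FT1_neg_eq Ψ
  set K := weightedYoungConst volume b (fun y => ‖κ y‖ₑ)
  have hK : K < ⊤ := weightedYoungConst_schwartz_lt_top κ (by
    rw [Module.finrank_self]
    push_cast
    linarith)
  -- The summand `1` keeps the constant positive when `Ψ = 0`.
  refine ⟨K.toReal ^ ((1 : ℝ) / 2) + 1, by positivity, fun δ hδ f => ?_⟩
  have hδ₀ : 0 ≤ δ := hδ.1.le
  have hf : bourgainEnergy ω b s (FT2 f) < ⊤ := bourgainEnergy_lt_top hgrowth (by linarith) s f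
  have energy_bound := bourgainEnergy_time_dilation_mul_le hω hb.le s hκ hδ f
  calc bourgainNorm ω b s (fun p => Ψ (p.2 / δ) * f p)
      ≤ (bourgainEnergy ω b s (FT2 fun p => Ψ (p.2 / δ) * f p)).toReal ^ ((1 : ℝ) / 2) :=
        bourgainNorm_le _
    _ ≤ (ENNReal.ofReal (δ ^ (1 - 2 * b)) * K * bourgainEnergy ω b s (FT2 f)).toReal ^
          ((1 : ℝ) / 2) := by
        gcongr
        finiteness
    _ = K.toReal ^ ((1 : ℝ) / 2) * δ ^ (1 / 2 - b) * bourgainNorm ω b s f := by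
        rw [bourgainNorm_eq hω, ENNReal.toReal_mul, ENNReal.toReal_mul,
          ENNReal.toReal_ofReal (by positivity), Real.mul_rpow (by positivity) (by positivity),
          Real.mul_rpow (by positivity) (by positivity), ← Real.rpow_mul hδ₀]
        ring_nf
    _ ≤ (K.toReal ^ ((1 : ℝ) / 2) + 1) * δ ^ (1 / 2 - b) * bourgainNorm ω b s f := by
        have : 0 ≤ bourgainNorm ω b s f := by rw [bourgainNorm_eq hω]; positivity
        gcongr
        linarith

theorem statement17 (a : ℝ) (ha : a ∈ Set.Ioo (0 : ℝ) 1) (s : ℝ)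
    (b : ℝ) (hb : b ∈ Set.Ioo (1 / 2 : ℝ) 1)
    (ψ : ℝ → ℝ) (hψ : TimeCutoff ψ) :
    ∃ C > 0, ∀ δ ∈ Set.Ioo (0 : ℝ) 1, ∀ f : SchwartzMap (ℝ × ℝ) ℂ,
      XtildeNorm a b s (fun p : ℝ × ℝ => (ψ (p.2 / δ) : ℂ) * f p) ≤
        C * δ ^ (1 / 2 - b) * XtildeNorm a b s (fun p => f p) := by
  obtain ⟨Ψ, hΨ⟩ := hψ.exists_schwartz_eq
  have growth (ξ : ℝ) : |disp a ξ| ≤ 1 * (1 + |ξ|) ^ (2 + a) :=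
    (abs_disp_le (by linarith [ha.1]) ξ).trans_eq (one_mul _).symm
  obtain ⟨C, hC, bound⟩ := statement17_general (measurable_disp a) growth s hb.1 Ψ
  refine ⟨C, hC, fun δ hδ f => ?_⟩
  simp only [← hΨ]
  exact bound δ (Set.Ioo_subset_Ioc_self hδ) f
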